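/- arXiv:2605.30402 — 2 statements merged into one kernel-verified Lean document; each statement's English description precedes it below -/
import Mathlib

section
/- Let λ ≥ -1/2 be a real number and let Δ ≥ 3 satisfy either Δ < 2λ+6, or n-3 ≤ Δ ≤ n-1. If U is a unicyclic graph with n vertices and maximum degree Δ, then GRM_λ(U) ≥ (Δ+λ)(Δ+Δλ+2) + (n-Δ)(2+λ)². -/
/-!
Write `c = 2 + λ ≥ 3/2`, let `y v = max (deg v - 2) 0` be the excess of a vertex, and `ℓ v` the
number of leaves adjacent to `v`. A unicyclic graph has average degree `2`, so the total excess
equals the number of leaves, which is also `∑ ℓ v` because each leaf has one neighbour.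
Expanding the summands as `(c + (deg a - 2)) (c + (deg b - 2))` and discarding the nonnegative
products `(-1) (-1)` coming from edges between two leaves gives (`grm_lower`)

  `GRM ≥ n c² + ∑ v, (c (y v ^ 2 + y v) - y v * ℓ v) + ∑_{edges ab} y a * y b`.

A vertex all of whose neighbours are leaves would make the graph a star, so `ℓ v ≤ y v + 1`
(`leafCount_le`) and every summand of the middle sum is nonnegative. Let `w` have degree
`Δ = D + 2`. The target is exactly the value `n c² + c (D² + D) - D²` obtained from `w` alone when
`ℓ w = D`, so the only problematic case is `ℓ w = D + 1`, where a deficit `D` has to be made up.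
Then `∑ y = ∑ ℓ` forces another vertex `b` with `ℓ b < y b`, and its summand is at least `2 c`,
which suffices when `D < 2 c`, i.e. `Δ < 2 λ + 6`. If instead `n ≤ Δ + 3`, counting vertices shows
that `b` is adjacent to `w` (`adj_of_large`), and the edge `wb` contributes `y w * y b ≥ D`.
-/

open SimpleGraph

/-- Degree of a vertex (classical decidability). -/
noncomputable def deg {V : Type*} [Fintype V] (G : SimpleGraph V) (v : V) : ℕ :=
  letI := Classical.decEq V
  letI : DecidableRel G.Adj := Classical.decRel _
  G.degree v

/-- Maximum degree of a graph (classical decidability). -/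
noncomputable def maxDeg {V : Type*} [Fintype V] (G : SimpleGraph V) : ℕ :=
  letI := Classical.decEq V
  letI : DecidableRel G.Adj := Classical.decRel _
  G.maxDegree

/-- The general reduced second Zagreb index
`GRM_λ(G) = Σ_{ab ∈ E(G)} (deg a + λ)(deg b + λ)`. -/
noncomputable def GRM {V : Type*} [Fintype V] (l : ℝ) (G : SimpleGraph V) : ℝ :=
  letI := Classical.decEq V
  letI : DecidableRel G.Adj := Classical.decRel _
  ∑ e ∈ G.edgeFinset,
    Sym2.lift ⟨fun a b => ((G.degree a : ℝ) + l) * ((G.degree b : ℝ) + l),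
      fun a b => by ring⟩ e

/-- A unicyclic graph: connected with exactly as many edges as vertices. -/
def IsUnicyclic {V : Type*} [Fintype V] (G : SimpleGraph V) : Prop :=
  G.Connected ∧ G.edgeSet.ncard = Fintype.card V

/-- A vertex lies on a cycle of `G`. -/
def OnCycle {V : Type*} (G : SimpleGraph V) (v : V) : Prop :=
  ∃ (u : V) (w : G.Walk u u), w.IsCycle ∧ v ∈ w.support

open Finset

section Helpers

variable {V : Type*} [Fintype V] [DecidableEq V] (G : SimpleGraph V) [DecidableRel G.Adj]

/-- The excess `max (deg v - 2) 0` of a vertex, as a truncated natural subtraction. -/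
def excess (v : V) : ℕ := G.degree v - 2

/-- The indicator (valued in `ℕ`) of being a leaf. -/
def leafInd (v : V) : ℕ := if G.degree v = 1 then 1 else 0

/-- The number of leaves adjacent to `v`. -/
def leafCount (v : V) : ℕ := ∑ u ∈ G.neighborFinset v, leafInd G u

omit [DecidableEq V] in
lemma sum_neighbor_swap {R : Type*} [AddCommMonoid R] (F : V → V → R) :
    ∑ v, ∑ u ∈ G.neighborFinset v, F v u = ∑ v, ∑ u ∈ G.neighborFinset v, F u v := by
  apply Finset.sum_comm'
  intro x y
  simp [G.adj_comm]

/-- Each edge is counted once from each of its ends. -/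
lemma two_mul_sum_edges (F : Sym2 V → ℝ) :
    2 * ∑ e ∈ G.edgeFinset, F e = ∑ v, ∑ u ∈ G.neighborFinset v, F s(v, u) := by
  have h1 : ∑ d : G.Dart, F d.edge = 2 * ∑ e ∈ G.edgeFinset, F e := by
    rw [← Finset.sum_fiberwise_of_maps_to (s := univ) (t := G.edgeFinset)
      (g := fun d : G.Dart => d.edge) (fun d _ => by simp), Finset.mul_sum]
    refine Finset.sum_congr rfl fun e he => ?_
    rw [Finset.sum_congr rfl (g := fun _ => F e) (by
      intro d hd
      rw [(Finset.mem_filter.1 hd).2]), Finset.sum_const,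
      G.dart_edge_fiber_card e (by simpa using he)]
    simp
  rw [← h1, Finset.sum_sigma']
  refine Finset.sum_bij' (fun d _ => ⟨d.fst, d.snd⟩)
    (fun x hx => ⟨(x.1, x.2), by simpa using hx⟩) ?_ ?_ ?_ ?_ ?_
  · intro d _; simp
  · simp
  · simp
  · simp
  · intro d _; rfl

omit [DecidableEq V] in
lemma degree_add_leafInd (hpos : ∀ v, 0 < G.degree v) (v : V) :
    G.degree v + leafInd G v = 2 + excess G v := by
  have := hpos v
  unfold leafInd excess
  split <;> omega

omit [DecidableEq V] in
lemma sum_excess_eq_sum_leafInd (hpos : ∀ v, 0 < G.degree v)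
    (hE : #G.edgeFinset = Fintype.card V) :
    ∑ v, excess G v = ∑ v, leafInd G v := by
  have h := Finset.sum_congr (rfl : (univ : Finset V) = univ)
    fun v _ => degree_add_leafInd G hpos v
  rw [Finset.sum_add_distrib, Finset.sum_add_distrib, G.sum_degrees_eq_twice_card_edges, hE] at h
  simp at h
  omega

omit [DecidableEq V] in
lemma sum_leafCount : ∑ v, leafCount G v = ∑ v, leafInd G v := by
  unfold leafCount
  rw [sum_neighbor_swap]
  refine Finset.sum_congr rfl fun v _ => ?_
  rw [Finset.sum_const, G.card_neighborFinset_eq_degree]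
  unfold leafInd
  split <;> simp [*]

omit [DecidableEq V] in
lemma leafCount_eq_card (v : V) :
    leafCount G v = #{u ∈ G.neighborFinset v | G.degree u = 1} := by
  unfold leafCount leafInd
  rw [Finset.card_filter]

omit [DecidableEq V] in
lemma leafCount_le_degree (v : V) : leafCount G v ≤ G.degree v := by
  rw [leafCount_eq_card, ← G.card_neighborFinset_eq_degree]
  exact Finset.card_filter_le _ _

omit [DecidableEq V] in
/-- The only neighbour of a leaf. -/
lemma eq_of_leaf {u v x : V} (hu : G.degree u = 1) (hv : G.Adj u v) (hx : G.Adj u x) : x = v := by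
  rw [← G.card_neighborFinset_eq_degree, Finset.card_eq_one] at hu
  obtain ⟨a, ha⟩ := hu
  have h1 : v ∈ G.neighborFinset u := by simpa using hv
  have h2 : x ∈ G.neighborFinset u := by simpa using hx
  rw [ha, Finset.mem_singleton] at h1 h2
  rw [h1, h2]

/-- A connected graph with as many edges as vertices is not a star. -/
lemma leafCount_lt_degree (hc : G.Connected) (hE : #G.edgeFinset = Fintype.card V) (v : V) :
    leafCount G v < G.degree v := by
  refine lt_of_le_of_ne (leafCount_le_degree G v) fun heq => ?_
  rw [leafCount_eq_card, ← G.card_neighborFinset_eq_degree] at heq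
  have hall : ∀ u, G.Adj v u → G.degree u = 1 := by
    intro u hu
    have := Finset.filter_eq_self.1 (Finset.eq_of_subset_of_card_le (Finset.filter_subset _ _)
      heq.ge)
    exact this u (by simpa using hu)
  have hstar : ∀ x, x = v ∨ G.Adj v x := by
    intro x
    have hr := (SimpleGraph.reachable_iff_reflTransGen v x).1 (hc.preconnected v x)
    induction hr with
    | refl => exact Or.inl rfl
    | tail _ hxy ih =>
      rcases ih with rfl | h
      · exact Or.inr hxy
      · exact Or.inl (eq_of_leaf G (hall _ h) h.symm hxy)
  have hsum := G.sum_degrees_eq_twice_card_edges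
  rw [← Finset.add_sum_erase _ _ (Finset.mem_univ v), hE] at hsum
  have hN : G.neighborFinset v = univ.erase v := by
    ext x
    have := hstar x
    simp only [SimpleGraph.mem_neighborFinset, Finset.mem_erase, Finset.mem_univ, and_true]
    exact ⟨fun h => h.ne', fun h => this.resolve_left h⟩
  have hd : G.degree v = #(univ.erase v) := by
    rw [← hN, G.card_neighborFinset_eq_degree]
  have hcard : #(univ.erase v) + 1 = Fintype.card V :=
    Finset.card_erase_add_one (Finset.mem_univ v)
  have h1 : ∑ x ∈ univ.erase v, G.degree x = #(univ.erase v) := by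
    rw [Finset.card_eq_sum_ones]
    refine Finset.sum_congr rfl fun x hx => hall x ?_
    rw [← hN] at hx
    simpa using hx
  omega

lemma leafCount_le (hc : G.Connected) (hE : #G.edgeFinset = Fintype.card V) (v : V) :
    leafCount G v ≤ excess G v + 1 := by
  have := leafCount_lt_degree G hc hE v
  unfold excess
  omega

/-- If all neighbours of `w` but one are leaves and `n ≤ deg w + 3`, then every other vertex of
degree at least `3` is adjacent to `w`: otherwise it avoids `w`, itself and the leaves at `w`,
leaving room for at most two neighbours. -/
lemma adj_of_large {w b : V} (hw : G.degree w ≤ leafCount G w + 1)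
    (hn : Fintype.card V ≤ G.degree w + 3) (hbw : b ≠ w) (hb : 3 ≤ G.degree b) : G.Adj w b := by
  by_contra hadj
  set L : Finset V := {u ∈ G.neighborFinset w | G.degree u = 1} with hL
  have hwL : w ∉ L := by simp [hL]
  have hbL : b ∉ L := by simp [hL, hadj]
  have hcard : #(insert b (insert w L)) = leafCount G w + 2 := by
    rw [Finset.card_insert_of_notMem (by simp [hbw, hbL]), Finset.card_insert_of_notMem hwL,
      leafCount_eq_card]
  have hsub : G.neighborFinset b ⊆ (insert b (insert w L))ᶜ := by
    intro x hx
    have hx' : G.Adj b x := by simpa using hx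
    simp only [Finset.mem_compl, Finset.mem_insert, not_or]
    refine ⟨hx'.ne', ?_, ?_⟩
    · rintro rfl; exact hadj hx'.symm
    · intro hxL
      obtain ⟨h1, h2⟩ := Finset.mem_filter.1 hxL
      exact hbw (eq_of_leaf G h2 (by simpa using h1 : G.Adj w x).symm hx'.symm)
  have := Finset.card_le_card hsub
  rw [Finset.card_compl, hcard, G.card_neighborFinset_eq_degree] at this
  omega

/-- The lower bound for the index obtained by expanding around degree `2` and dropping the
product term `(-1) * (-1)` of edges between two leaves. The last sum runs over ordered pairs, hence
the factor `1 / 2`. -/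
lemma grm_lower (l : ℝ) (hpos : ∀ v, 0 < G.degree v) (hE : #G.edgeFinset = Fintype.card V) :
    (Fintype.card V : ℝ) * (2 + l) ^ 2
      + ∑ v, ((2 + l) * ((excess G v : ℝ) ^ 2 + excess G v) - excess G v * leafCount G v)
      + 1 / 2 * ∑ v, ∑ u ∈ G.neighborFinset v, (excess G v : ℝ) * excess G u
    ≤ ∑ e ∈ G.edgeFinset,
        Sym2.lift ⟨fun a b => ((G.degree a : ℝ) + l) * ((G.degree b : ℝ) + l),
          fun a b => by ring⟩ e := by
  set y : V → ℝ := fun v => excess G v with hy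
  set z : V → ℝ := fun v => leafInd G v with hz
  have hd : ∀ v, (G.degree v : ℝ) = 2 + y v - z v := by
    intro v
    have := degree_add_leafInd G hpos v
    have h : (G.degree v : ℝ) + z v = 2 + y v := by simp only [hy, hz]; exact_mod_cast this
    linarith
  have hyz : ∀ v, y v * z v = 0 := by
    intro v
    simp only [hy, hz, excess, leafInd]
    split <;> simp [*]
  have hzz : ∀ v, z v * z v = z v := by
    intro v
    simp only [hz, leafInd]
    split <;> simp
  have hz0 : ∀ v, 0 ≤ z v := fun v => Nat.cast_nonneg _
  have hsum : ∑ v, y v = ∑ v, z v := by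
    simp only [hy, hz]
    exact_mod_cast sum_excess_eq_sum_leafInd G hpos hE
  have hlc : ∀ v, (leafCount G v : ℝ) = ∑ u ∈ G.neighborFinset v, z u := by
    intro v
    simp [leafCount, hz]
  have h2 := two_mul_sum_edges G
    (Sym2.lift ⟨fun a b => ((G.degree a : ℝ) + l) * ((G.degree b : ℝ) + l), fun a b => by ring⟩)
  simp only [Sym2.lift_mk] at h2
  -- The summand is symmetric, so both mixed terms may be moved to the first vertex.
  have h3 : ∑ v, ∑ u ∈ G.neighborFinset v, ((G.degree v : ℝ) + l) * ((G.degree u : ℝ) + l)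
      = ∑ v, ∑ u ∈ G.neighborFinset v,
          ((2 + l) ^ 2 + 2 * (2 + l) * (y v - z v) - 2 * y v * z u + y v * y u + z v * z u) := by
    have hs := sum_neighbor_swap G (fun v u => (2 + l) * (y v - z v) - y v * z u)
    rw [← sub_eq_zero, ← Finset.sum_sub_distrib] at hs ⊢
    rw [← neg_eq_zero, ← Finset.sum_neg_distrib] at hs
    rw [← hs]
    refine Finset.sum_congr rfl fun v _ => ?_
    rw [← Finset.sum_sub_distrib, ← Finset.sum_sub_distrib, ← Finset.sum_neg_distrib]
    refine Finset.sum_congr rfl fun u _ => ?_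
    rw [hd, hd]
    ring
  have h4 : ∀ v, ∑ u ∈ G.neighborFinset v,
        ((2 + l) ^ 2 + 2 * (2 + l) * (y v - z v) - 2 * y v * z u + y v * y u + z v * z u)
      = 2 * (2 + l) ^ 2 + 2 * ((2 + l) * (y v ^ 2 + y v) - y v * leafCount G v)
        + ((2 + l) ^ 2 + 2 * (2 + l)) * (y v - z v)
        + ∑ u ∈ G.neighborFinset v, y v * y u + ∑ u ∈ G.neighborFinset v, z v * z u := by
    intro v
    rw [Finset.sum_add_distrib, Finset.sum_add_distrib, Finset.sum_sub_distrib, Finset.sum_const,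
      ← Finset.mul_sum _ _ (2 * y v), ← hlc, G.card_neighborFinset_eq_degree, nsmul_eq_mul, hd]
    linear_combination (-4 * (2 + l)) * hyz v + (2 * (2 + l)) * hzz v
  have h5 : 0 ≤ ∑ v, ∑ u ∈ G.neighborFinset v, z v * z u :=
    Finset.sum_nonneg fun v _ => Finset.sum_nonneg fun u _ => mul_nonneg (hz0 v) (hz0 u)
  rw [h3, Finset.sum_congr rfl fun v _ => h4 v, Finset.sum_add_distrib, Finset.sum_add_distrib,
    Finset.sum_add_distrib, Finset.sum_add_distrib, ← Finset.mul_sum, ← Finset.mul_sum,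
    ← Finset.mul_sum _ (fun v => y v - z v), Finset.sum_sub_distrib (f := y), hsum] at h2
  simp only [Finset.sum_const, Finset.card_univ, nsmul_eq_mul] at h2
  linarith

/-- The main bound, in terms of the excess `D = Δ - 2` of a vertex `w` of degree `Δ`. -/
lemma grm_bound (l : ℝ) (hl : -1 / 2 ≤ l) (hc : G.Connected)
    (hE : #G.edgeFinset = Fintype.card V) (w : V) (hw : 3 ≤ G.degree w)
    (hr : (G.degree w : ℝ) < 2 * l + 6 ∨ Fintype.card V ≤ G.degree w + 3) :
    (Fintype.card V : ℝ) * (2 + l) ^ 2 + (2 + l) * ((excess G w : ℝ) ^ 2 + excess G w)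
      - (excess G w : ℝ) ^ 2
    ≤ ∑ e ∈ G.edgeFinset,
        Sym2.lift ⟨fun a b => ((G.degree a : ℝ) + l) * ((G.degree b : ℝ) + l),
          fun a b => by ring⟩ e := by
  have hpos : ∀ v, 0 < G.degree v := by
    have : Nontrivial V := by
      obtain ⟨u, hu⟩ := (G.degree_pos_iff_exists_adj w).1 (by omega)
      exact ⟨w, u, hu.ne⟩
    exact fun v => hc.preconnected.degree_pos_of_nontrivial v
  refine le_trans ?_ (grm_lower G l hpos hE)
  set g : V → ℝ := fun v =>
    (2 + l) * ((excess G v : ℝ) ^ 2 + excess G v) - excess G v * leafCount G v with hg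
  have hlc : ∀ v, (leafCount G v : ℝ) ≤ excess G v + 1 := fun v => by
    exact_mod_cast leafCount_le G hc hE v
  have hy0 : ∀ v, (0 : ℝ) ≤ excess G v := fun v => Nat.cast_nonneg _
  have hg0 : ∀ v, 0 ≤ g v := by
    intro v
    have h1 := mul_le_mul_of_nonneg_left (hlc v) (hy0 v)
    have h2 : 0 ≤ (1 + l) * ((excess G v : ℝ) ^ 2 + excess G v) :=
      mul_nonneg (by linarith) (by nlinarith [hy0 v])
    simp only [hg]
    nlinarith
  have hY0 : ∀ v, 0 ≤ ∑ u ∈ G.neighborFinset v, (excess G v : ℝ) * excess G u :=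
    fun v => Finset.sum_nonneg fun u _ => mul_nonneg (hy0 v) (hy0 u)
  have hYs := Finset.sum_nonneg fun v (_ : v ∈ (univ : Finset V)) => hY0 v
  have hwD : (excess G w : ℝ) = G.degree w - 2 := by
    unfold excess
    push_cast [Nat.cast_sub (by omega : 2 ≤ G.degree w)]
    ring
  by_cases hcase : leafCount G w ≤ excess G w
  · have h1 : g w ≤ ∑ v, g v := Finset.single_le_sum (fun v _ => hg0 v) (Finset.mem_univ w)
    have h2 : (leafCount G w : ℝ) ≤ excess G w := by exact_mod_cast hcase
    have h3 := mul_le_mul_of_nonneg_left h2 (hy0 w)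
    simp only [hg] at h1 ⊢
    nlinarith
  have hweq : leafCount G w = excess G w + 1 := by
    have := leafCount_le G hc hE w
    omega
  -- The total excess equals the total leaf count, so some vertex makes up for the shortfall at `w`.
  obtain ⟨b, hb⟩ : ∃ b, leafCount G b < excess G b := by
    by_contra! hno
    have : ∑ v, excess G v < ∑ v, leafCount G v :=
      Finset.sum_lt_sum (fun v _ => hno v) ⟨w, Finset.mem_univ w, by omega⟩
    rw [sum_leafCount, sum_excess_eq_sum_leafInd G hpos hE] at this
    exact lt_irrefl _ this
  have hbw : b ≠ w := by rintro rfl; omega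
  have hb' : (leafCount G b : ℝ) + 1 ≤ excess G b := by exact_mod_cast hb
  have hb1 : (1 : ℝ) ≤ excess G b := by
    have : 1 ≤ excess G b := by omega
    exact_mod_cast this
  have hpair : g w + g b ≤ ∑ v, g v := by
    rw [← Finset.sum_pair hbw.symm]
    exact Finset.sum_le_sum_of_subset_of_nonneg (Finset.subset_univ _) fun v _ _ => hg0 v
  have hgw : g w = (2 + l) * ((excess G w : ℝ) ^ 2 + excess G w) - (excess G w : ℝ) ^ 2
      - excess G w := by
    simp only [hg, hweq]
    push_cast
    ring
  rcases hr with hr | hr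
  · have hgb : 2 * (2 + l) ≤ g b := by
      have h1 := mul_le_mul_of_nonneg_left hb' (hy0 b)
      have h2 : 0 ≤ (1 + l) * ((excess G b : ℝ) ^ 2 + excess G b - 2) :=
        mul_nonneg (by linarith) (by nlinarith)
      simp only [hg]
      nlinarith
    linarith
  · have hadj : G.Adj w b := by
      refine adj_of_large G ?_ hr hbw ?_
      · unfold excess at hweq; omega
      · unfold excess at hb; omega
    have hY : 2 * (excess G w : ℝ)
        ≤ ∑ v, ∑ u ∈ G.neighborFinset v, (excess G v : ℝ) * excess G u := by
      have h1 : ∑ v ∈ {w, b}, ∑ u ∈ G.neighborFinset v, (excess G v : ℝ) * excess G u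
          ≤ ∑ v, ∑ u ∈ G.neighborFinset v, (excess G v : ℝ) * excess G u :=
        Finset.sum_le_sum_of_subset_of_nonneg (Finset.subset_univ _) fun v _ _ => hY0 v
      rw [Finset.sum_pair hbw.symm] at h1
      have h2 := Finset.single_le_sum (f := fun u => (excess G w : ℝ) * excess G u)
        (fun u _ => mul_nonneg (hy0 w) (hy0 u)) (by simpa using hadj : b ∈ G.neighborFinset w)
      have h3 := Finset.single_le_sum (f := fun u => (excess G b : ℝ) * excess G u)
        (fun u _ => mul_nonneg (hy0 b) (hy0 u)) (by simpa using hadj.symm : w ∈ G.neighborFinset b)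
      have h4 := mul_le_mul_of_nonneg_left hb1 (hy0 w)
      linarith
    linarith [hg0 b]

end Helpers

theorem stmt6 {V : Type*} [Fintype V] (l : ℝ) (hl : -1/2 ≤ l)
    (n Δ : ℕ) (hΔ3 : 3 ≤ Δ)
    (hrange : (Δ : ℝ) < 2 * l + 6 ∨ (n - 3 ≤ Δ ∧ Δ ≤ n - 1))
    (U : SimpleGraph V) (hU : IsUnicyclic U)
    (hcard : Fintype.card V = n) (hmax : maxDeg U = Δ) :
    GRM l U ≥ ((Δ : ℝ) + l) * ((Δ : ℝ) + (Δ : ℝ) * l + 2)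
      + ((n : ℝ) - (Δ : ℝ)) * (2 + l) ^ 2 := by
  let := Classical.decEq V
  let : DecidableRel U.Adj := Classical.decRel _
  obtain ⟨hc, hE⟩ := hU
  have hE' : #U.edgeFinset = Fintype.card V := by
    rw [← hE, ← U.coe_edgeFinset, Set.ncard_coe_finset]
  have := hc.nonempty
  obtain ⟨w, hw⟩ := U.exists_maximal_degree_vertex
  have hw' : U.degree w = Δ := hw.symm.trans hmax
  have key := grm_bound U l hl hc hE' w (by omega) (by
    rw [hw', hcard]
    rcases hrange with h | h
    · exact Or.inl h
    · right; omega)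
  have hD : (excess U w : ℝ) = Δ - 2 := by
    unfold excess
    rw [hw']
    push_cast [Nat.cast_sub (by omega : 2 ≤ Δ)]
    ring
  rw [hD, hcard] at key
  refine ge_iff_le.2 (le_trans (le_of_eq ?_) key)
  ring
end

section
/- Let λ ≥ -1/2 be a real number and Δ ≥ 3. Let U be a unicyclic graph with n vertices and maximum degree Δ such that no vertex of degree Δ lies on the cycle of U. Let a be a vertex with deg_U(a) = Δ and let b be a vertex of the cycle of U minimizing the distance d_U(a,b). If either deg_U(b) ≥ 4, or there exists a vertex c distinct from a and b with deg_U(c) ≥ 3, then there exists a unicyclic graph U' with n vertices and maximum degree Δ such that GRM_λ(U') < GRM_λ(U). -/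
/-!
Write `y v = deg v + l`. The new graph arises by moving a single edge. Suppose a vertex `c ≠ a` of
degree `d ≥ 3` carries a pendant path ending in a leaf `u`, and let `w` be the next vertex on a
path from `c` to `a`; it is not on the pendant path and has degree at least two. Replacing the edge
`cw` by `wu` keeps the graph connected, the number of edges and the degree of `a`, raises only the
degree of `u` (to two), and changes the index by
`y p + (3 - d) * y w - ∑_{v ∼ c} y v - [c ∼ u]`, where `p` is the neighbour of `u` (`switch_GRM`).
If `p = c` this is at most `(d - 2) * (1 - y w)`, and otherwise `y p = 2 + l` is the weight of
the first vertex of the pendant path, so the change is at most `-(d - 2) * y w`. Both are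
negative because `y w ≥ 2 + l ≥ 3 / 2` (`exists_switch`).

It remains to find such a `c`. Every leaf ends a pendant path attached at some vertex of degree at
least three (`exists_chain`). If that vertex were always `a`, then, since a pendant path is
determined by its first edge and the edge of `a` leading to `b` starts none, there would be at most
`deg a - 1` leaves (`card_leaves_lt`). But in a unicyclic graph `∑ v, (deg v - 2) = 0`, so the
number of leaves is `(deg a - 2) + ∑ (deg v - 2)`, the sum running over the `v ≠ a` of degree at
least three. As `b` has degree at least three (`three_le_deg_of_closest`), the hypothesis on the
degrees makes this last sum at least two, a contradiction.
-/

open SimpleGraph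

/-! ### Degrees and the index as sums -/

theorem deg_eq_card {V : Type*} [Fintype V] (G : SimpleGraph V) [DecidableRel G.Adj] (v : V) :
    deg G v = G.degree v := by
  unfold deg
  convert! rfl

theorem deg_eq_sum {V : Type*} [Fintype V] (G : SimpleGraph V) [DecidableRel G.Adj] (v : V) :
    (deg G v : ℝ) = ∑ j, if G.Adj v j then (1 : ℝ) else 0 := by
  rw [deg_eq_card, ← SimpleGraph.card_neighborFinset_eq_degree,
    SimpleGraph.neighborFinset_eq_filter]
  simp

/-- Summing over ordered pairs counts every edge twice. -/
theorem two_mul_GRM {V : Type*} [Fintype V] (l : ℝ) (G : SimpleGraph V) [DecidableRel G.Adj] :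
    2 * GRM l G = ∑ i, ∑ j, (if G.Adj i j then (1 : ℝ) else 0) *
      ((deg G i + l) * (deg G j + l)) := by
  classical
  have h1 : GRM l G = ∑ e ∈ G.edgeFinset,
      Sym2.lift ⟨fun a b => ((deg G a : ℝ) + l) * ((deg G b : ℝ) + l),
        fun a b => by ring⟩ e := by
    unfold GRM deg
    convert! rfl
  rw [h1, Finset.mul_sum, ← Finset.sum_product']
  simp_rw [ite_mul, zero_mul, one_mul]
  rw [← Finset.sum_filter, ← Finset.sum_fiberwise_of_maps_to
    (s := (Finset.univ ×ˢ Finset.univ).filter fun x : V × V => G.Adj x.1 x.2)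
    (t := G.edgeFinset) (g := fun x => s(x.1, x.2)) (by simp)]
  refine Finset.sum_congr rfl fun e he => ?_
  induction e with
  | h x y =>
    have hxy : G.Adj x y := by simpa using he
    have : ((Finset.univ ×ˢ Finset.univ).filter fun x : V × V => G.Adj x.1 x.2).filter
        (fun p => s(p.1, p.2) = s(x, y)) = {(x, y), (y, x)} := by
      ext ⟨p, q⟩
      simp only [Finset.mem_filter, Finset.mem_product, Finset.mem_univ, true_and, Sym2.eq_iff,
        Finset.mem_insert, Finset.mem_singleton, Prod.mk.injEq]
      constructor
      · exact fun h => h.2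
      · rintro (⟨rfl, rfl⟩ | ⟨rfl, rfl⟩)
        · exact ⟨hxy, Or.inl ⟨rfl, rfl⟩⟩
        · exact ⟨hxy.symm, Or.inr ⟨rfl, rfl⟩⟩
    rw [this, Finset.sum_pair (by simp [hxy.ne])]
    simp only [Sym2.lift_mk]
    ring

/-! ### Pendant paths -/

/-- `Chain G x y u`: the walk leaving `x` through its neighbour `y` runs through vertices of
degree two until it stops at the leaf `u`, i.e. `y, …, u` is a pendant path attached at `x`. -/
inductive Chain {V : Type*} [Fintype V] (G : SimpleGraph V) : V → V → V → Prop
  | leaf {x u : V} (h : G.Adj x u) (hu : deg G u = 1) : Chain G x u u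
  | step {x y z u : V} (h : G.Adj x y) (hy : deg G y = 2) (hz : G.Adj y z) (hzx : z ≠ x)
      (hc : Chain G y z u) : Chain G x y u

section Local
variable {V : Type*} [Fintype V] {G : SimpleGraph V}

theorem deg_one_unique {x y z : V} (h : deg G x = 1) (hy : G.Adj x y) (hz : G.Adj x z) :
    y = z := by
  classical
  rw [deg_eq_card, ← SimpleGraph.card_neighborFinset_eq_degree, Finset.card_eq_one] at h
  obtain ⟨t, ht⟩ := h
  have h1 : y ∈ G.neighborFinset x := by simpa using hy
  have h2 : z ∈ G.neighborFinset x := by simpa using hz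
  rw [ht, Finset.mem_singleton] at h1 h2
  rw [h1, h2]

theorem deg_two_unique {x p y z : V} (h : deg G x = 2) (hp : G.Adj x p) (hy : G.Adj x y)
    (hz : G.Adj x z) (hyp : y ≠ p) (hzp : z ≠ p) : y = z := by
  classical
  rw [deg_eq_card, ← SimpleGraph.card_neighborFinset_eq_degree, Finset.card_eq_two] at h
  obtain ⟨s, t, -, ht⟩ := h
  have h0 : p ∈ G.neighborFinset x := by simpa using hp
  have h1 : y ∈ G.neighborFinset x := by simpa using hy
  have h2 : z ∈ G.neighborFinset x := by simpa using hz
  simp only [ht, Finset.mem_insert, Finset.mem_singleton] at h0 h1 h2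
  grind

theorem le_deg_of_subset {x : V} (s : Finset V) (h : ∀ y ∈ s, G.Adj x y) :
    s.card ≤ deg G x := by
  classical
  rw [deg_eq_card, ← SimpleGraph.card_neighborFinset_eq_degree]
  exact Finset.card_le_card fun y hy => by simpa using h y hy

theorem Chain.adj {x y u : V} (h : Chain G x y u) : G.Adj x y := by cases h <;> assumption

theorem Chain.deg_end {x y u : V} (h : Chain G x y u) : deg G u = 1 := by
  induction h <;> assumption

theorem Chain.deg_le {x y u : V} (h : Chain G x y u) : deg G y ≤ 2 := by
  cases h <;> omega

theorem Chain.cases_parent {x y u : V} (h : Chain G x y u) :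
    y = u ∨ (deg G y = 2 ∧ ∃ p, G.Adj u p ∧ deg G p = 2) := by
  induction h with
  | leaf h hu => exact Or.inl rfl
  | step h hy hz hzx hc ih =>
    refine Or.inr ⟨hy, ?_⟩
    rcases ih with rfl | ⟨-, h⟩
    · exact ⟨_, hz.symm, hy⟩
    · exact h

/-- Pendant paths are determined by their first edge. -/
theorem Chain.unique {x y u v : V} (h : Chain G x y u) (h' : Chain G x y v) : u = v := by
  induction h with
  | leaf h hu =>
    cases h' with
    | leaf => rfl
    | step => omega
  | step h hy hz hzx hc ih =>
    cases h' with
    | leaf => omega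
    | step h2 hy2 hz2 hzx2 hc2 =>
      obtain rfl := deg_two_unique hy h.symm hz hz2 hzx hzx2
      exact ih hc2

/-- A path entering a pendant path cannot leave it again. -/
theorem Chain.no_path {x y u b : V} (h : Chain G x y u) (hb : 3 ≤ deg G b)
    (p : G.Walk y b) (hp : p.IsPath) (hx : x ∉ p.support) : False := by
  induction h with
  | leaf h hu =>
    cases p with
    | nil => omega
    | cons h1 q =>
      obtain rfl := deg_one_unique hu h1 h.symm
      simp at hx
  | @step x _ _ _ h hy hz hzx hc ih =>
    cases p with
    | nil => omega
    | @cons _ t _ h1 q =>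
      rw [SimpleGraph.Walk.cons_isPath_iff] at hp
      have htx : t ≠ x := fun e => hx (by subst e; simp)
      obtain rfl := deg_two_unique hy h.symm h1 hz htx hzx
      exact ih q hp.1 hp.2

/-- The end of a pendant path is joined to its start by a walk avoiding any given vertex `c` of
degree at least three. -/
theorem Chain.walk {x y u c : V} (h : Chain G x y u) (hc : 3 ≤ deg G c) :
    ∃ p : G.Walk y u, c ∉ p.support := by
  induction h with
  | @leaf x u h hu => exact ⟨.nil, by simp; rintro rfl; omega⟩
  | step h hy hz hzx hc ih =>
    obtain ⟨p, hp⟩ := ih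
    exact ⟨.cons hz p, by simp [hp]; rintro rfl; omega⟩

/-- Following a path that starts by climbing up a pendant path, one meets a vertex of degree at
least three to which the extended pendant path is attached. -/
theorem Chain.extend {x y u a : V} (hxy : G.Adj x y)
    (hc : Chain G y x u) (ha : 3 ≤ deg G a) (p : G.Walk y a) (hp : p.IsPath)
    (hx : x ∉ p.support) : ∃ c z, 3 ≤ deg G c ∧ Chain G c z u := by
  induction p generalizing x with
  | nil => exact ⟨_, _, ha, hc⟩
  | @cons y z a h q ih =>
    by_cases hy : 3 ≤ deg G y
    · exact ⟨_, _, hy, hc⟩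
    · have hzx : z ≠ x := fun e => hx (by subst e; simp)
      have h2 : 2 ≤ deg G y := by
        classical
        rw [← Finset.card_pair hzx]
        exact le_deg_of_subset _ (by simp [h, hxy.symm])
      rw [SimpleGraph.Walk.cons_isPath_iff] at hp
      exact ih h (.step h.symm (by omega) hxy.symm hzx.symm hc) ha hp.1 hp.2

theorem exists_chain (hconn : G.Connected) {a u : V}
    (ha : 3 ≤ deg G a) (hu : deg G u = 1) : ∃ c z, 3 ≤ deg G c ∧ Chain G c z u := by
  obtain ⟨p, hp⟩ := hconn.exists_isPath u a
  cases p with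
  | nil => omega
  | cons h q =>
    rw [SimpleGraph.Walk.cons_isPath_iff] at hp
    exact Chain.extend h (.leaf h.symm hu) ha q hp.1 hp.2

end Local

/-! ### Moving one edge -/

section Polar
variable {V : Type*} [Fintype V] [DecidableEq V]

theorem sum_rank_one (z : V → ℝ) (x w : V) :
    ∑ i, ∑ j, (if i = x then (1 : ℝ) else 0) * (if j = w then 1 else 0) * (z i * z j) =
      z x * z w := by
  have : ∀ i j, (if i = x then (1 : ℝ) else 0) * (if j = w then 1 else 0) * (z i * z j) =
      (if i = x then z i else 0) * (if j = w then z j else 0) := by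
    intro i j; split_ifs <;> simp
  simp only [this, ← Finset.mul_sum, Finset.sum_ite_eq', Finset.mem_univ, if_true,
    ← Finset.sum_mul]

/-- Polarisation of the quadratic form of a symmetric matrix with zero diagonal, for the
increment `1_u - 1_c`. -/
theorem sum_polar (A : V → V → ℝ) (hA : ∀ i j, A i j = A j i) (h0 : ∀ i, A i i = 0)
    (y : V → ℝ) (u c : V) :
    ∑ i, ∑ j, A i j * ((y i + ((if i = u then 1 else 0) - (if i = c then 1 else 0))) *
        (y j + ((if j = u then 1 else 0) - (if j = c then 1 else 0)))) =
      ∑ i, ∑ j, A i j * (y i * y j) + 2 * ∑ j, A u j * y j - 2 * ∑ j, A c j * y j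
        - 2 * A c u := by
  have h1 : ∀ i, ∑ j, A i j * ((y i + ((if i = u then 1 else 0) - (if i = c then 1 else 0))) *
        (y j + ((if j = u then 1 else 0) - (if j = c then 1 else 0)))) =
      (y i + ((if i = u then 1 else 0) - (if i = c then 1 else 0))) *
        (∑ j, A i j * y j + A i u - A i c) := by
    intro i
    rw [add_sub_assoc, mul_add, Finset.mul_sum]
    have : A i u - A i c =
        ∑ j, A i j * ((if j = u then 1 else 0) - (if j = c then 1 else 0)) := by
      simp [mul_sub, Finset.sum_sub_distrib]
    rw [this, Finset.mul_sum, ← Finset.sum_add_distrib]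
    exact Finset.sum_congr rfl fun j _ => by ring
  have h2 : ∀ x, ∑ i, y i * A i x = ∑ j, A x j * y j := fun x =>
    Finset.sum_congr rfl fun j _ => by rw [hA x j, mul_comm]
  have h3 : ∑ i, ∑ j, A i j * (y i * y j) = ∑ i, y i * ∑ j, A i j * y j :=
    Finset.sum_congr rfl fun i _ => by
      rw [Finset.mul_sum]; exact Finset.sum_congr rfl fun j _ => by ring
  simp only [h1, h3]
  simp only [add_mul, sub_mul, Finset.sum_add_distrib, Finset.sum_sub_distrib, ite_mul,
    one_mul, zero_mul, Finset.sum_ite_eq', Finset.mem_univ, if_true, mul_add, mul_sub, h2, h0,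
    hA u c]
  ring

end Polar

section Switch
variable {V : Type*} (G : SimpleGraph V)

/-- The graph `G - cw + wu`: the edge `cw` is moved from `c` to `u`. -/
def switch (c w u : V) : SimpleGraph V := G.deleteEdges {s(c, w)} ⊔ SimpleGraph.edge w u

variable {G}

theorem switch_adj {c w u : V} (hwu : w ≠ u) (i j : V) : (switch G c w u).Adj i j ↔
    (G.Adj i j ∧ ¬ (c = i ∧ w = j ∨ c = j ∧ w = i)) ∨ (i = w ∧ j = u ∨ i = u ∧ j = w) := by
  simp only [switch, SimpleGraph.sup_adj, SimpleGraph.deleteEdges_adj, SimpleGraph.edge_adj,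
    Set.mem_singleton_iff, Sym2.eq_iff]
  grind

open Classical in
/-- Adjacency matrix of `G - cw + wu`. -/
theorem switch_ind {c w u : V} (hcw : G.Adj c w) (hwu : ¬ G.Adj w u) (hne : w ≠ u)
    (i j : V) :
    (if (switch G c w u).Adj i j then (1 : ℝ) else 0) = (if G.Adj i j then (1 : ℝ) else 0)
      - (if i = c then 1 else 0) * (if j = w then 1 else 0)
      - (if i = w then 1 else 0) * (if j = c then 1 else 0)
      + (if i = w then 1 else 0) * (if j = u then 1 else 0)
      + (if i = u then 1 else 0) * (if j = w then 1 else 0) := by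
  have h1 : c ≠ w := hcw.ne
  have h2 : c ≠ u := by rintro rfl; exact hwu hcw.symm
  have h3 : G.Adj w c := hcw.symm
  have h4 : ¬ G.Adj u w := fun h => hwu h.symm
  simp only [switch_adj hne]
  by_cases e1 : i = c <;> by_cases e2 : i = w <;> by_cases e3 : i = u <;>
  by_cases e4 : j = c <;> by_cases e5 : j = w <;> by_cases e6 : j = u <;>
  simp_all [eq_comm]

open Classical in
theorem switch_deg [Fintype V] {c w u : V} (hcw : G.Adj c w) (hwu : ¬ G.Adj w u) (hne : w ≠ u) (i : V) :
    (deg (switch G c w u) i : ℝ) =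
      deg G i + ((if i = u then 1 else 0) - (if i = c then 1 else 0)) := by
  have h1 : c ≠ w := hcw.ne
  rw [deg_eq_sum, deg_eq_sum]
  simp only [switch_ind hcw hwu hne, Finset.sum_add_distrib, Finset.sum_sub_distrib,
    ← Finset.mul_sum, Finset.sum_ite_eq', Finset.mem_univ, if_true]
  ring

open Classical in
/-- The effect of the switch on the index, from a polarisation of the quadratic form
`y ↦ ∑ A i j * y i * y j`, where `y = deg + l` changes by the indicator of `u` minus that of
`c`. -/
theorem switch_GRM [Fintype V] (l : ℝ) {c w u : V} (hcw : G.Adj c w) (hwu : ¬ G.Adj w u) (hne : w ≠ u) :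
    GRM l (switch G c w u) = GRM l G
      + (∑ j, (if G.Adj u j then (1 : ℝ) else 0) * (deg G j + l))
      - (∑ j, (if G.Adj c j then (1 : ℝ) else 0) * (deg G j + l))
      - (if G.Adj c u then 1 else 0)
      - (deg G w + l) * (deg G c + l - 1) + (deg G w + l) * (deg G u + l + 1) := by
  have h1 : c ≠ w := hcw.ne
  have h2 : c ≠ u := by rintro rfl; exact hwu hcw.symm
  have key : 2 * GRM l (switch G c w u) = 2 * (GRM l G
      + (∑ j, (if G.Adj u j then (1 : ℝ) else 0) * (deg G j + l))
      - (∑ j, (if G.Adj c j then (1 : ℝ) else 0) * (deg G j + l))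
      - (if G.Adj c u then 1 else 0)
      - (deg G w + l) * (deg G c + l - 1) + (deg G w + l) * (deg G u + l + 1)) := by
    have hz : ∀ i, (deg (switch G c w u) i : ℝ) + l = (deg G i + l) +
        ((if i = u then 1 else 0) - (if i = c then 1 else 0)) := by
      intro i; rw [switch_deg hcw hwu hne]; ring
    have hpol := sum_polar (fun i j => if G.Adj i j then (1 : ℝ) else 0)
      (fun i j => by simp only [G.adj_comm]) (fun i => by simp) (fun i => (deg G i : ℝ) + l) u c
    have hG := two_mul_GRM l G
    have hw : (deg (switch G c w u) w : ℝ) + l = deg G w + l := by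
      rw [hz]; simp [hne, h1.symm]
    have hc : (deg (switch G c w u) c : ℝ) + l = deg G c + l - 1 := by
      rw [hz]; simp [h2]; ring
    have hu : (deg (switch G c w u) u : ℝ) + l = deg G u + l + 1 := by
      rw [hz]; simp [h2.symm]
    simp only [← hz] at hpol
    rw [two_mul_GRM]
    simp only [switch_ind hcw hwu hne]
    generalize deg (switch G c w u) = d' at *
    simp only [add_mul, sub_mul, Finset.sum_add_distrib, Finset.sum_sub_distrib]
    simp only [← add_mul]
    have r := sum_rank_one (fun i => (d' i : ℝ) + l)
    rw [r c w, r w c, r w u, r u w, hpol, ← hG, hw, hc, hu]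
    ring
  linarith

/-- It suffices to reconnect `c` with `u`, since the removed edge `cw` is then replaced by the
detour through `u`. -/
theorem switch_connected {c w u : V} (hG : G.Connected) (hne : w ≠ u)
    (hr : (switch G c w u).Reachable c u) : (switch G c w u).Connected := by
  have hcw' : (switch G c w u).Reachable c w :=
    hr.trans (SimpleGraph.Adj.reachable ((switch_adj hne _ _).2 (Or.inr (Or.inr ⟨rfl, rfl⟩))))
  have step : ∀ x y, G.Adj x y → (switch G c w u).Reachable x y := by
    intro x y h
    by_cases hh : c = x ∧ w = y ∨ c = y ∧ w = x
    · rcases hh with ⟨rfl, rfl⟩ | ⟨rfl, rfl⟩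
      · exact hcw'
      · exact hcw'.symm
    · exact SimpleGraph.Adj.reachable ((switch_adj hne _ _).2 (Or.inl ⟨h, hh⟩))
  have := hG.nonempty
  refine ⟨fun x y => ?_⟩
  obtain ⟨p⟩ := hG.preconnected x y
  induction p with
  | nil => rfl
  | cons h q ih => exact (step _ _ h).trans ih

theorem switch_reachable_of_walk {c w u x y : V} (hne : w ≠ u) (p : G.Walk x y)
    (hp : c ∉ p.support) : (switch G c w u).Reachable x y := by
  induction p with
  | nil => rfl
  | @cons x y z h q ih =>
    simp only [SimpleGraph.Walk.support_cons, List.mem_cons, not_or] at hp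
    refine (SimpleGraph.Adj.reachable ((switch_adj hne _ _).2 (Or.inl ⟨h, ?_⟩))).trans (ih hp.2)
    rintro (⟨rfl, -⟩ | ⟨rfl, -⟩)
    · exact hp.1 rfl
    · exact hp.2 (by simp)

theorem switch_ncard [Fintype V] {c w u : V} (hcw : G.Adj c w) (hwu : ¬ G.Adj w u) (hne : w ≠ u) :
    (switch G c w u).edgeSet.ncard = G.edgeSet.ncard := by
  have : (switch G c w u).edgeSet = insert s(w, u) (G.edgeSet \ {s(c, w)}) := by
    rw [switch, SimpleGraph.edgeSet_sup, SimpleGraph.edgeSet_edge_of_ne hne,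
      SimpleGraph.edgeSet_deleteEdges, Set.union_singleton]
  rw [this, Set.ncard_insert_of_notMem (fun h => hwu h.1) (Set.toFinite _),
    Set.ncard_sdiff_singleton_add_one (by simpa using hcw) (Set.toFinite _)]

end Switch

/-! ### Lowering the index -/

section Main
variable {V : Type*} [Fintype V] {G : SimpleGraph V}

theorem one_le_deg_of_adj {x y : V} (h : G.Adj x y) : 1 ≤ deg G x := by
  simpa using le_deg_of_subset {y} (by simpa using h)

open Classical in
theorem sum_le_sum_neighbors {l : ℝ} (hl : -1/2 ≤ l) {c : V} (s : Finset V)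
    (hs : ∀ j ∈ s, G.Adj c j) :
    ∑ j ∈ s, ((deg G j : ℝ) + l) ≤
      ∑ j, (if G.Adj c j then (1 : ℝ) else 0) * (deg G j + l) := by
  calc ∑ j ∈ s, ((deg G j : ℝ) + l)
      = ∑ j ∈ s, (if G.Adj c j then (1 : ℝ) else 0) * (deg G j + l) :=
        Finset.sum_congr rfl fun j hj => by rw [if_pos (hs j hj), one_mul]
    _ ≤ _ := by
        refine Finset.sum_le_sum_of_subset_of_nonneg (Finset.subset_univ s) fun j _ _ => ?_
        split_ifs with h
        · have : (1 : ℝ) ≤ deg G j := by exact_mod_cast one_le_deg_of_adj h.symm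
          linarith
        · simp

open Classical in
theorem sum_neighbors_leaf (l : ℝ) {u p : V} (hu : deg G u = 1) (hp : G.Adj u p) :
    ∑ j, (if G.Adj u j then (1 : ℝ) else 0) * (deg G j + l) = deg G p + l := by
  rw [Finset.sum_eq_single p]
  · simp [hp]
  · intro j _ hj
    rw [if_neg fun h => hj (deg_one_unique hu h hp), zero_mul]
  · simp

/-- If a vertex `c ≠ a` of degree at least three carries a pendant path with end `u`, then moving
the edge from `c` to its neighbour `w` in the direction of `a` so that it hangs at `u` instead
keeps the graph connected and lowers the index. -/
theorem exists_switch {l : ℝ} (hl : -1/2 ≤ l) (hG : G.Connected) {a c z u : V} (hca : c ≠ a)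
    (ha : 3 ≤ deg G a) (hc : 3 ≤ deg G c) (hch : Chain G c z u) :
    ∃ w, G.Adj c w ∧ ¬ G.Adj w u ∧ w ≠ u ∧ (switch G c w u).Connected ∧
      GRM l (switch G c w u) < GRM l G := by
  classical
  have hu := hch.deg_end
  obtain ⟨p, hp⟩ := hG.exists_isPath c a
  cases p with
  | nil => exact absurd rfl hca
  | @cons _ w _ hcw q =>
  rw [SimpleGraph.Walk.cons_isPath_iff] at hp
  have hzw : z ≠ w := by
    rintro rfl
    exact hch.no_path ha q hp.1 hp.2
  have hw2 : 2 ≤ deg G w := by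
    cases q with
    | nil => omega
    | @cons _ t _ hwt q' =>
      have : c ≠ t := by
        rintro rfl
        exact hp.2 (by simp)
      rw [← Finset.card_pair this]
      exact le_deg_of_subset _ (by simp [hwt, hcw.symm])
  have hne : w ≠ u := by rintro rfl; omega
  have hcu : c ≠ u := by rintro rfl; omega
  have hwu : ¬ G.Adj w u := by
    intro h
    rcases hch.cases_parent with rfl | ⟨-, t, htu, ht⟩
    · have := deg_one_unique hu h.symm hch.adj.symm
      exact hcw.ne this.symm
    · obtain rfl := deg_one_unique hu h.symm htu
      -- otherwise `c, w, u` would itself be a pendant path leading towards `a`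
      exact (Chain.step hcw ht h hcu.symm (.leaf h hu)).no_path ha q hp.1 hp.2
  refine ⟨w, hcw, hwu, hne, switch_connected hG hne ?_, ?_⟩
  · obtain ⟨r, hr⟩ := hch.walk hc
    refine SimpleGraph.Reachable.trans (SimpleGraph.Adj.reachable
      ((switch_adj hne _ _).2 (Or.inl ⟨hch.adj, ?_⟩))) (switch_reachable_of_walk hne r hr)
    rintro (⟨-, h⟩ | ⟨h, -⟩)
    · exact hzw h.symm
    · exact hch.adj.ne h
  · rw [switch_GRM l hcw hwu hne]
    have hS := sum_le_sum_neighbors (G := G) hl (c := c) {z, w} (by simp [hch.adj, hcw])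
    rw [Finset.sum_pair hzw] at hS
    have hcR : (3 : ℝ) ≤ deg G c := by exact_mod_cast hc
    have hwR : (2 : ℝ) ≤ deg G w := by exact_mod_cast hw2
    have huR : (deg G u : ℝ) = 1 := by exact_mod_cast hu
    rcases hch.cases_parent with rfl | ⟨hz2, t, htu, ht⟩
    -- the change is at most `(deg c - 2) * (1 - (deg w + l))` for a pendant edge at `c`, and at
    -- most `-(deg c - 2) * (deg w + l)` for a longer pendant path
    · rw [sum_neighbors_leaf l hu hch.adj.symm, if_pos hch.adj]
      rw [huR] at hS ⊢
      nlinarith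
    · rw [sum_neighbors_leaf l hu htu, huR]
      have hzR : (deg G z : ℝ) = 2 := by exact_mod_cast hz2
      have htR : (deg G t : ℝ) = 2 := by exact_mod_cast ht
      have : (0 : ℝ) ≤ if G.Adj c u then 1 else 0 := by split_ifs <;> simp
      rw [hzR] at hS
      rw [htR]
      nlinarith

/-! ### Degrees and the count of leaves -/

theorem maxDeg_eq {Δ : ℕ} {a : V} (h : ∀ v, deg G v ≤ Δ) (ha : deg G a = Δ) :
    maxDeg G = Δ := by
  classical
  have : maxDeg G = G.maxDegree := by unfold maxDeg; convert! rfl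
  rw [this]
  refine le_antisymm (G.maxDegree_le_of_forall_degree_le _ fun v => ?_) ?_
  · rw [← deg_eq_card]; exact h v
  · rw [← ha, deg_eq_card]; exact G.degree_le_maxDegree a

theorem deg_le_maxDeg (v : V) : deg G v ≤ maxDeg G := by
  classical
  have : maxDeg G = G.maxDegree := by unfold maxDeg; convert! rfl
  rw [this, deg_eq_card]; exact G.degree_le_maxDegree v

/-- A cycle vertex closest to a vertex `a` off the cycle has two neighbours on the cycle and one
in the direction of `a`. -/
theorem three_le_deg_of_closest (hG : G.Connected) {a b : V} (hb : OnCycle G b)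
    (hmin : ∀ c : V, OnCycle G c → G.dist a b ≤ G.dist a c) (hab : b ≠ a) :
    3 ≤ deg G b := by
  classical
  obtain ⟨x, w, hw, hbw⟩ := hb
  set r := w.rotate b hbw
  have hr : r.IsCycle := hw.rotate hbw
  obtain ⟨p, hp⟩ := hG.exists_walk_length_eq_dist b a
  cases p with
  | nil => exact absurd rfl hab
  | @cons _ t _ h q =>
  have hlt : ¬ OnCycle G t := by
    intro ht
    have h1 := hmin t ht
    have h2 := SimpleGraph.dist_le q
    rw [SimpleGraph.dist_comm, SimpleGraph.dist_comm (u := a)] at h1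
    simp only [SimpleGraph.Walk.length_cons] at hp
    omega
  have h1 : r.snd ≠ t := by
    rintro rfl
    exact hlt ⟨_, r, hr, r.getVert_mem_support _⟩
  have h2 : r.penultimate ≠ t := by
    rintro rfl
    exact hlt ⟨_, r, hr, r.getVert_mem_support _⟩
  have h3 := hr.snd_ne_penultimate
  rw [← Finset.card_eq_three.2 ⟨_, _, _, h3, h1, h2, rfl⟩]
  refine le_deg_of_subset _ ?_
  have n := hr.not_nil
  simp [h, r.adj_snd n, (r.adj_penultimate n).symm]

theorem sum_deg_sub_two (hU : IsUnicyclic G) : ∑ v, ((deg G v : ℤ) - 2) = 0 := by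
  classical
  have h := G.sum_degrees_eq_twice_card_edges
  have h2 : G.edgeFinset.card = Fintype.card V := by
    rw [← hU.2, ← SimpleGraph.coe_edgeFinset, Set.ncard_coe_finset]
  rw [h2] at h
  simp only [deg_eq_card, Finset.sum_sub_distrib, ← Nat.cast_sum, h]
  simp [mul_comm]

/-- If every pendant path is attached at `a`, then there are fewer than `deg a` leaves, since pendant paths are determined by their first edge and the edge towards `b` starts none. -/
theorem card_leaves_lt (hG : G.Connected) {a b : V} (ha : 3 ≤ deg G a) (hb : 3 ≤ deg G b)
    (hab : a ≠ b) (hall : ∀ c z u, 3 ≤ deg G c → Chain G c z u → c = a) :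
    ∃ L : Finset V, (∀ v, v ∈ L ↔ deg G v = 1) ∧ L.card < deg G a := by
  classical
  refine ⟨Finset.univ.filter fun v => deg G v = 1, by simp, ?_⟩
  obtain ⟨p, hp⟩ := hG.exists_isPath a b
  cases p with
  | nil => exact absurd rfl hab
  | @cons _ t _ h q =>
  rw [SimpleGraph.Walk.cons_isPath_iff] at hp
  have hex : ∀ u, ∃ z, deg G u = 1 → Chain G a z u := by
    intro u
    by_cases hu : deg G u = 1
    · obtain ⟨c, z, hc, hch⟩ := exists_chain hG ha hu
      obtain rfl := hall c z u hc hch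
      exact ⟨z, fun _ => hch⟩
    · exact ⟨u, fun h => absurd h hu⟩
  choose f hf using hex
  calc (Finset.univ.filter fun v => deg G v = 1).card
      ≤ ((G.neighborFinset a).erase t).card := by
        refine Finset.card_le_card_of_injOn f ?_ ?_
        · intro u hu
          have hu' := hf u (by simpa using hu)
          have : f u ≠ t := by
            intro e
            rw [e] at hu'
            exact hu'.no_path hb q hp.1 hp.2
          simp [this, hu'.adj]
        · intro u hu v hv huv
          have hu' := hf u (by simpa using hu)
          have hv' := hf v (by simpa using hv)
          rw [huv] at hu'
          exact hu'.unique hv'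
    _ < (G.neighborFinset a).card := Finset.card_erase_lt_of_mem (by simpa using h)
    _ = deg G a := by rw [deg_eq_card, SimpleGraph.card_neighborFinset_eq_degree]

end Main

theorem stmt8 {V : Type*} [Fintype V] (l : ℝ) (hl : -1/2 ≤ l)
    (n Δ : ℕ) (hΔ3 : 3 ≤ Δ) (U : SimpleGraph V) (hU : IsUnicyclic U)
    (hcard : Fintype.card V = n) (hmax : maxDeg U = Δ)
    (hnocycle : ∀ v : V, deg U v = Δ → ¬ OnCycle U v)
    (a b : V) (ha : deg U a = Δ) (hb : OnCycle U b)
    (hmin : ∀ c : V, OnCycle U c → U.dist a b ≤ U.dist a c)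
    (hcond : 4 ≤ deg U b ∨ ∃ c : V, c ≠ a ∧ c ≠ b ∧ 3 ≤ deg U c) :
    ∃ U' : SimpleGraph V, IsUnicyclic U' ∧ maxDeg U' = Δ ∧
      GRM l U' < GRM l U := by
  classical
  have hba : b ≠ a := by
    rintro rfl
    exact hnocycle b ha hb
  have hb3 := three_le_deg_of_closest hU.1 hb hmin hba
  have ha3 : 3 ≤ deg U a := ha ▸ hΔ3
  by_cases hall : ∀ c z u, 3 ≤ deg U c → Chain U c z u → c = a
  · exfalso
    obtain ⟨L, hL, hLc⟩ := card_leaves_lt hU.1 ha3 hb3 hba.symm hall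
    have : Nontrivial V := ⟨b, a, hba⟩
    have hpos : ∀ v, 1 ≤ deg U v := fun v => by
      rw [deg_eq_card]
      exact hU.1.preconnected.degree_pos_of_nontrivial v
    have hsum := sum_deg_sub_two hU
    have hLs : ∑ v, (if v ∈ L then (-1 : ℤ) else 0) = -L.card := by simp
    -- total excess of the vertices of degree at least three, against the number of leaves
    have bound : ∀ g : V → ℤ, (∀ v, g v ≤ if v = a then 0 else max ((deg U v : ℤ) - 2) 0) →
        ∑ v, g v ≤ 1 := by
      intro g hg
      have : ∑ v, ((if v ∈ L then (-1 : ℤ) else 0) +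
          (if v = a then (deg U a : ℤ) - 2 else 0) + g v) ≤ ∑ v, ((deg U v : ℤ) - 2) := by
        refine Finset.sum_le_sum fun v _ => ?_
        have h1 := hg v
        have h2 := hpos v
        by_cases hva : v = a
        · subst hva
          have : v ∉ L := fun h => by rw [hL] at h; omega
          simp only [this, if_true, if_false] at h1 ⊢
          omega
        · simp only [hva, hL, if_false] at h1 ⊢
          split_ifs <;> omega
      rw [hsum, Finset.sum_add_distrib, Finset.sum_add_distrib, hLs] at this
      simp only [Finset.sum_ite_eq', Finset.mem_univ, if_true] at this
      omega
    rcases hcond with h4 | ⟨c, hca, hcb, hc⟩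
    · have := bound (fun v => if v = b then 2 else 0) (by
        intro v
        by_cases hv : v = b
        · subst hv; simp only [if_true, hba, if_false]; omega
        · simp only [hv, if_false]; split_ifs <;> simp)
      simp at this
    · have := bound (fun v => (if v = b then 1 else 0) + (if v = c then 1 else 0)) (by
        intro v
        by_cases hv : v = b
        · subst hv; simp only [if_true, hba, hcb.symm, if_false]; omega
        · by_cases hv' : v = c
          · subst hv'; simp only [if_true, hca, hcb, if_false]; omega
          · simp only [hv, hv', if_false]; split_ifs <;> simp)
      simp [Finset.sum_add_distrib] at this
  · push Not at hall
    obtain ⟨c, z, u, hc, hch, hca⟩ := hall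
    obtain ⟨w, hcw, hwu, hne, hconn, hlt⟩ := exists_switch hl hU.1 hca ha3 hc hch
    have hu := hch.deg_end
    -- the degree drops at `c` and rises only at the leaf `u`, to two; so `a` keeps degree `Δ`
    refine ⟨switch U c w u, ⟨hconn, (switch_ncard hcw hwu hne).trans hU.2⟩,
      maxDeg_eq (a := a) (fun v => ?_) ?_, hlt⟩
    · have hd := switch_deg hcw hwu hne v
      have hv : deg U v ≤ Δ := hmax ▸ deg_le_maxDeg v
      have hvR : (deg U v : ℝ) ≤ Δ := by exact_mod_cast hv
      have h3R : (3 : ℝ) ≤ Δ := by exact_mod_cast hΔ3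
      have : (deg (switch U c w u) v : ℝ) ≤ Δ := by
        rw [hd]
        by_cases hvu : v = u
        · subst hvu
          rw [hu]
          split_ifs <;> push_cast <;> linarith
        · rw [if_neg hvu]
          split_ifs <;> linarith
      exact_mod_cast this
    · have hd := switch_deg hcw hwu hne a
      have hau : a ≠ u := by rintro rfl; omega
      rw [if_neg hau, if_neg hca.symm, sub_zero, add_zero] at hd
      rw [← ha]
      exact_mod_cast hd
end
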